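/- arXiv:math/0702563 — 4 statements merged into one kernel-verified Lean document; each statement's English description precedes it below -/
import Mathlib

section
/- (Lemma 2.) Let A = (A₁, A₂) be a pure commuting 2-contraction on H such that D_{A*} is injective, let (z₁,z₂) ∈ 𝔻² and x ∈ H. Then A₁*x = z̄₁x and A₂*x = z̄₂x if and only if (θ_A(z₁,z₂))*(D_{A*}x) = 0. -/
/-!
The commutation `D_A A* = A* D_{A*}` gives
`θ_A(z)* D_{A*} x = D_A (-A* x + Z* y)` with `y = (1 - A Z*)⁻¹ D_{A*}² x`.
If `A* x = Z* x`, then `D_{A*}² x = x - A A* x = (1 - A Z*) x`, so `y = x` and the right side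
vanishes. Conversely, `D_A` is injective because `D_{A*}` is
(`injective_defect_of_injective_defect_adjoint`), so vanishing means `A* x = Z* y`; then
`x - A A* x = D_{A*}² x = y - A Z* y` gives `x = y`, hence `A* x = Z* x`.

The commutation relation is `defect_comp_adjoint`: the difference `P = D_A A* - A* D_{A*}`
satisfies `D_A P = -P D_{A*}`, and positivity together with injectivity of `D_A` forces `P = 0`.
-/

open ContinuousLinearMap Filter

section Defect

variable {H K : Type*} [NormedAddCommGroup H] [InnerProductSpace ℂ H] [CompleteSpace H]
  [NormedAddCommGroup K] [InnerProductSpace ℂ K] [CompleteSpace K]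

theorem injective_defect_of_injective_defect_adjoint {T : K →L[ℂ] H} {D : H →L[ℂ] H}
    {E : K →L[ℂ] K} (hD : D * D = 1 - T ∘L adjoint T) (hE : E * E = 1 - adjoint T ∘L T)
    (hinj : Function.Injective D) : Function.Injective E := by
  rw [injective_iff_map_eq_zero]
  intro u hu
  have h1 : u = adjoint T (T u) := by
    have := congrArg (fun F : K →L[ℂ] K => F u) hE
    simpa [hu, sub_eq_zero, eq_comm (a := (0 : K))] using this
  have h2 : D (D (T u)) = 0 := by
    have := congrArg (fun F : H →L[ℂ] H => F (T u)) hD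
    simpa [← h1] using this
  have h3 : T u = 0 := hinj ((hinj (h2.trans (map_zero D).symm)).trans (map_zero D).symm)
  rw [h1, h3, map_zero]

/-- The square roots of `1 - T T*` and `1 - T* T` are intertwined by `T*`, when the former is
injective. -/
theorem defect_comp_adjoint {T : K →L[ℂ] H} {D : H →L[ℂ] H} {E : K →L[ℂ] K}
    (hDpos : 0 ≤ D) (hEpos : 0 ≤ E)
    (hD : D * D = 1 - T ∘L adjoint T) (hE : E * E = 1 - adjoint T ∘L T)
    (hinj : Function.Injective D) : E ∘L adjoint T = adjoint T ∘L D := by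
  set P : H →L[ℂ] K := E ∘L adjoint T - adjoint T ∘L D with hP
  have hEP : E ∘L P = -(P ∘L D) := by
    ext h
    have h1 := congrArg (fun F : K →L[ℂ] K => F (adjoint T h)) hE
    have h2 := congrArg (fun F : H →L[ℂ] H => adjoint T (F h)) hD
    simp only [mul_apply_eq_comp, sub_apply, one_apply_eq_self, comp_apply, map_sub] at h1 h2
    simp [hP, h1, h2]
  have hEadj : adjoint E = E := (nonneg_iff_isPositive E |>.1 hEpos).isSelfAdjoint.adjoint_eq
  have hDadj : adjoint D = D := (nonneg_iff_isPositive D |>.1 hDpos).isSelfAdjoint.adjoint_eq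
  set S : K →L[ℂ] K := P ∘L adjoint P with hS
  have hSpos : 0 ≤ S := (nonneg_iff_isPositive S).2 (isPositive_self_comp_adjoint P)
  have hES : E * S = -(P ∘L D ∘L adjoint P) := by
    ext u
    simpa [hS] using congrArg (fun F : H →L[ℂ] K => F (adjoint P u)) hEP
  have hSE : S * E = -(P ∘L D ∘L adjoint P) := by
    have := congrArg adjoint hEP
    simp only [adjoint_comp, map_neg, hEadj, hDadj] at this
    ext u
    simpa [hS] using congrArg (fun F : K →L[ℂ] H => P (F u)) this
  -- `E` and `S = P P*` are commuting positive operators with `E S = -P D P* ≤ 0`.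
  have hnonneg : 0 ≤ E * S := Commute.mul_nonneg hEpos hSpos (hES.trans hSE.symm)
  have hPD : 0 ≤ P ∘L D ∘L adjoint P :=
    (nonneg_iff_isPositive _).2 ((nonneg_iff_isPositive D |>.1 hDpos).conj_adjoint P)
  have hzero : E * S = 0 := le_antisymm (by rw [hES]; exact neg_nonpos.2 hPD) hnonneg
  have hEinj := injective_defect_of_injective_defect_adjoint hD hE hinj
  have hP0 : adjoint P = 0 := by
    ext u
    have h1 : S u = 0 := hEinj (by
      rw [map_zero]; exact congrArg (fun F : K →L[ℂ] K => F u) hzero)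
    have h2 : inner ℂ (adjoint P u) (adjoint P u) = 0 := by
      rw [adjoint_inner_left]
      change inner ℂ u (S u) = 0
      rw [h1, inner_zero_right]
    simpa using h2
  have : P = 0 := by rw [← adjoint_adjoint P, hP0, map_zero]
  exact sub_eq_zero.1 this

/-- The adjoint of a row operator is the corresponding column of adjoints. -/
theorem adjoint_row_apply (B₁ B₂ : H →L[ℂ] H) (B : WithLp 2 (H × H) →L[ℂ] H)
    (hB : ∀ x y : H, B ((WithLp.equiv 2 (H × H)).symm (x, y)) = B₁ x + B₂ y) (h : H) :
    adjoint B h = (WithLp.equiv 2 (H × H)).symm (adjoint B₁ h, adjoint B₂ h) := by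
  refine ext_inner_right ℂ fun u => ?_
  have hu : u = (WithLp.equiv 2 (H × H)).symm (u.fst, u.snd) := rfl
  rw [adjoint_inner_left, WithLp.prod_inner_apply]
  conv_lhs => rw [hu, hB, inner_add_right]
  simp [adjoint_inner_left]

end Defect

theorem lemma_two
    {H : Type*} [NormedAddCommGroup H] [InnerProductSpace ℂ H] [CompleteSpace H]
    (A₁ A₂ : H →L[ℂ] H)
    (hcomm : A₁ * A₂ = A₂ * A₁)
    (hcontr : A₁ * adjoint A₁ + A₂ * adjoint A₂ ≤ 1)
    (hpure : ∀ x : H, Tendsto (fun n => ((A₁ * adjoint A₁ + A₂ * adjoint A₂) ^ n) x) atTop (nhds 0))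
    (Dstar : H →L[ℂ] H) (hDstar_pos : 0 ≤ Dstar)
    (hDstar_sq : Dstar * Dstar = 1 - A₁ * adjoint A₁ - A₂ * adjoint A₂)
    (hDstar_inj : Function.Injective ⇑Dstar)
    (Arow : WithLp 2 (H × H) →L[ℂ] H)
    (hArow : ∀ x y : H, Arow ((WithLp.equiv 2 (H × H)).symm (x, y)) = A₁ x + A₂ y)
    (DA : WithLp 2 (H × H) →L[ℂ] WithLp 2 (H × H)) (hDA_pos : 0 ≤ DA)
    (hDA_sq : DA * DA = 1 - (adjoint Arow) ∘L Arow)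
    (z₁ z₂ : ℂ) (hz : ‖z₁‖ ^ 2 + ‖z₂‖ ^ 2 < 1)
    (R : H →L[ℂ] H) (hR₁ : R * (1 - z₁ • adjoint A₁ - z₂ • adjoint A₂) = 1)
    (hR₂ : (1 - z₁ • adjoint A₁ - z₂ • adjoint A₂) * R = 1)
    (Zrow : WithLp 2 (H × H) →L[ℂ] H)
    (hZrow : ∀ x y : H, Zrow ((WithLp.equiv 2 (H × H)).symm (x, y)) = z₁ • x + z₂ • y)
    (x : H) :
    (adjoint A₁ x = (starRingEnd ℂ z₁) • x ∧ adjoint A₂ x = (starRingEnd ℂ z₂) • x) ↔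
      adjoint (-Arow + Dstar ∘L R ∘L Zrow ∘L DA) (Dstar x) = 0 := by
  have hA := adjoint_row_apply A₁ A₂ Arow hArow
  have hZ := adjoint_row_apply (z₁ • 1) (z₂ • 1) Zrow (by simpa using hZrow)
  have hD : Dstar * Dstar = 1 - Arow ∘L adjoint Arow := by
    ext h
    simp only [hDstar_sq, sub_apply, comp_apply, hA, hArow, mul_apply_eq_comp]
    abel
  have hint := defect_comp_adjoint hDstar_pos hDA_pos hD hDA_sq hDstar_inj
  have hDAinj := injective_defect_of_injective_defect_adjoint hD hDA_sq hDstar_inj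
  have hDAadj : adjoint DA = DA :=
    (nonneg_iff_isPositive DA |>.1 hDA_pos).isSelfAdjoint.adjoint_eq
  have hDsadj : adjoint Dstar = Dstar :=
    (nonneg_iff_isPositive Dstar |>.1 hDstar_pos).isSelfAdjoint.adjoint_eq
  have hM : (1 : H →L[ℂ] H) - z₁ • adjoint A₁ - z₂ • adjoint A₂ = 1 - Zrow ∘L adjoint Arow := by
    ext h
    simp only [sub_apply, comp_apply, hA, hZrow, smul_apply]
    abel
  rw [hM] at hR₁ hR₂
  have hMadj : adjoint (1 - Zrow ∘L adjoint Arow) = 1 - Arow ∘L adjoint Zrow := by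
    have h1 : adjoint (1 : H →L[ℂ] H) = 1 := star_one _
    rw [map_sub, adjoint_comp, adjoint_adjoint, h1]
  have hR₁' : ∀ h, adjoint R h - Arow (adjoint Zrow (adjoint R h)) = h := by
    have h1 : star (R * (1 - Zrow ∘L adjoint Arow)) = 1 := by rw [hR₁, star_one]
    rw [star_mul, star_eq_adjoint, star_eq_adjoint, hMadj] at h1
    intro h
    simpa using congrArg (fun F : H →L[ℂ] H => F h) h1
  have hR₂' : ∀ h, adjoint R (h - Arow (adjoint Zrow h)) = h := by
    have h1 : star ((1 - Zrow ∘L adjoint Arow) * R) = 1 := by rw [hR₂, star_one]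
    rw [star_mul, star_eq_adjoint, star_eq_adjoint, hMadj] at h1
    intro h
    simpa using congrArg (fun F : H →L[ℂ] H => F h) h1
  have hDx : Dstar (Dstar x) = x - Arow (adjoint Arow x) := by
    simpa using congrArg (fun F : H →L[ℂ] H => F x) hD
  have heig : (adjoint A₁ x = (starRingEnd ℂ z₁) • x ∧ adjoint A₂ x = (starRingEnd ℂ z₂) • x) ↔
      adjoint Arow x = adjoint Zrow x := by
    have h1 : ∀ z : ℂ, adjoint (z • (1 : H →L[ℂ] H)) x = (starRingEnd ℂ z) • x := fun z => by
      rw [← star_eq_adjoint, star_smul, star_one]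
      rfl
    rw [hA, hZ, (WithLp.equiv 2 (H × H)).symm.injective.eq_iff, Prod.mk.injEq, h1, h1]
  have hθ : adjoint (-Arow + Dstar ∘L R ∘L Zrow ∘L DA) (Dstar x) =
      DA (adjoint Zrow (adjoint R (x - Arow (adjoint Arow x))) - adjoint Arow x) := by
    have h1 : DA (adjoint Arow x) = adjoint Arow (Dstar x) :=
      congrArg (fun F : H →L[ℂ] WithLp 2 (H × H) => F x) hint
    rw [map_add, map_neg, adjoint_comp, adjoint_comp, adjoint_comp]
    simp only [hDAadj, hDsadj, add_apply, neg_apply, comp_apply,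
      hDx]
    rw [map_sub DA, h1]
    abel
  rw [heig, hθ, map_eq_zero_iff DA hDAinj, sub_eq_zero]
  constructor
  · intro h
    rw [h, hR₂']
  · intro h
    have h1 := hR₁' (x - Arow (adjoint Arow x))
    rw [h] at h1
    rw [sub_left_inj] at h1
    rw [← h, h1]
end

section
/- (Proposition 3.) Let A = (A₁, A₂) be a pure commuting 2-contraction on H such that D_{A*} is injective, and let (z₁,z₂) ∈ 𝔻². Then (z₁,z₂) ∈ σ_T^{(2)}(A) if and only if there exists X = (x₁,x₂) ∈ H ⊕ H such that θ_A(z₁,z₂)(D_A X) = 0 and X ≠ ((A₁ − z₁)h, (z₂ − A₂)h) for every h ∈ H. -/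
/-!
The defect operators intertwine with the row operator, `A D_A = D_{A*} A`, so
`θ_A(z) D_A X = D_{A*} (-A + R Z (1 - A*A)) X` with `R = (1 - Z A*)⁻¹`. As `D_{A*}` is injective and
`(1 - Z A*)(-A + R Z (1 - A*A)) = Z - A`, the vector `θ_A(z) D_A X` vanishes exactly when
`A X = Z X`, that is, when `(A₁ - z₁) x₁ + (A₂ - z₂) x₂ = 0`. The two conditions of the theorem
then correspond to each other under `(x₁, x₂) ↦ (x₁, -x₂)`.

The intertwining follows from a general fact (`intertwine_of_sq`): if `S, T ≥ 0` and
`S² B = B T²`, then `S B = B T`.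
-/

open ContinuousLinearMap Filter

lemma comp_adjoint_self_eq_zero {H K : Type*} [NormedAddCommGroup H] [InnerProductSpace ℂ H]
    [CompleteSpace H] [NormedAddCommGroup K] [InnerProductSpace ℂ K] [CompleteSpace K]
    (Y : K →L[ℂ] H) (h : Y ∘L adjoint Y = 0) : Y = 0 := by
  have h1 := norm_adjoint_comp_self (adjoint Y)
  rw [adjoint_adjoint, h, norm_zero] at h1
  have h2 : adjoint Y = 0 := norm_eq_zero.mp (mul_self_eq_zero.mp h1.symm)
  rw [← adjoint_adjoint Y, h2, map_zero]

/-- Positive square roots inherit intertwining relations. With `Y = S B - B T` one has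
`S Y = -Y T`, so `S (Y Y*) = -Y T Y*` is both a product of commuting positive operators and
negative; hence `S Y = 0` and `Y T = 0`, which forces `Y Y* Y = 0`. -/
lemma intertwine_of_sq {H K : Type*} [NormedAddCommGroup H] [InnerProductSpace ℂ H]
    [CompleteSpace H] [NormedAddCommGroup K] [InnerProductSpace ℂ K] [CompleteSpace K]
    (S : H →L[ℂ] H) (T : K →L[ℂ] K) (hS : 0 ≤ S) (hT : 0 ≤ T) (B : K →L[ℂ] H)
    (h : S ∘L S ∘L B = B ∘L T ∘L T) : S ∘L B = B ∘L T := by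
  have hSp := (nonneg_iff_isPositive S).mp hS
  have hTp := (nonneg_iff_isPositive T).mp hT
  have hSa : adjoint S = S := hSp.isSelfAdjoint.adjoint_eq
  have hTa : adjoint T = T := hTp.isSelfAdjoint.adjoint_eq
  obtain ⟨Y, hY⟩ : ∃ Y, Y = S ∘L B - B ∘L T := ⟨_, rfl⟩
  have hSY : S ∘L Y = -(Y ∘L T) := by
    rw [hY, comp_sub, sub_comp, comp_assoc B, ← h, comp_assoc]; abel
  have hYa : adjoint Y = adjoint B ∘L S - T ∘L adjoint B := by
    rw [hY, map_sub, adjoint_comp, adjoint_comp, hSa, hTa]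
  have hQ : 0 ≤ Y ∘L T ∘L adjoint Y := (nonneg_iff_isPositive _).mpr (hTp.conj_adjoint Y)
  have hP : 0 ≤ Y ∘L adjoint Y := by
    rw [nonneg_iff_isPositive]
    exact (isPositive_one (𝕜 := ℂ) (E := K)).conj_adjoint Y
  have hSP : S * (Y ∘L adjoint Y) = -(Y ∘L T ∘L adjoint Y) := by
    rw [mul_def, ← comp_assoc, hSY, neg_comp, comp_assoc]
  have hPS : (Y ∘L adjoint Y) * S = -(Y ∘L T ∘L adjoint Y) := by
    have h2 := congrArg adjoint hSY
    rw [adjoint_comp, map_neg, adjoint_comp, hSa, hTa] at h2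
    rw [mul_def, comp_assoc, h2, comp_neg]
  have hSP0 : S * (Y ∘L adjoint Y) = 0 := by
    have h1 : 0 ≤ S * (Y ∘L adjoint Y) := Commute.mul_nonneg hS hP (hSP.trans hPS.symm)
    refine le_antisymm ?_ h1
    rw [hSP]; exact neg_nonpos.mpr hQ
  have hSY0 : S ∘L Y = 0 := by
    apply comp_adjoint_self_eq_zero
    rw [adjoint_comp, hSa, ← comp_assoc, comp_assoc S]
    rw [mul_def] at hSP0
    rw [hSP0, zero_comp]
  have hYT0 : Y ∘L T = 0 := by rw [← neg_eq_zero, ← hSY, hSY0]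
  have hYYY : Y ∘L adjoint Y ∘L Y = 0 := by
    rw [hYa, sub_comp, comp_assoc, hSY0, comp_zero, zero_sub, comp_neg, comp_assoc,
      ← comp_assoc, hYT0, zero_comp, neg_zero]
  have hP0 : Y ∘L adjoint Y = 0 := by
    apply comp_adjoint_self_eq_zero
    rw [adjoint_comp, adjoint_adjoint, ← comp_assoc, comp_assoc Y (adjoint Y) Y, hYYY, zero_comp]
  exact sub_eq_zero.mp (hY ▸ comp_adjoint_self_eq_zero Y hP0)

theorem sigma_two_char
    {H : Type*} [NormedAddCommGroup H] [InnerProductSpace ℂ H] [CompleteSpace H]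
    (A₁ A₂ : H →L[ℂ] H)
    (hcomm : A₁ * A₂ = A₂ * A₁)
    (hcontr : A₁ * adjoint A₁ + A₂ * adjoint A₂ ≤ 1)
    (hpure : ∀ x : H, Tendsto (fun n => ((A₁ * adjoint A₁ + A₂ * adjoint A₂) ^ n) x) atTop (nhds 0))
    (Dstar : H →L[ℂ] H) (hDstar_pos : 0 ≤ Dstar)
    (hDstar_sq : Dstar * Dstar = 1 - A₁ * adjoint A₁ - A₂ * adjoint A₂)
    (hDstar_inj : Function.Injective ⇑Dstar)
    (Arow : WithLp 2 (H × H) →L[ℂ] H)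
    (hArow : ∀ x y : H, Arow ((WithLp.equiv 2 (H × H)).symm (x, y)) = A₁ x + A₂ y)
    (DA : WithLp 2 (H × H) →L[ℂ] WithLp 2 (H × H)) (hDA_pos : 0 ≤ DA)
    (hDA_sq : DA * DA = 1 - (adjoint Arow) ∘L Arow)
    (z₁ z₂ : ℂ) (hz : ‖z₁‖ ^ 2 + ‖z₂‖ ^ 2 < 1)
    (R : H →L[ℂ] H) (hR₁ : R * (1 - z₁ • adjoint A₁ - z₂ • adjoint A₂) = 1)
    (hR₂ : (1 - z₁ • adjoint A₁ - z₂ • adjoint A₂) * R = 1)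
    (Zrow : WithLp 2 (H × H) →L[ℂ] H)
    (hZrow : ∀ x y : H, Zrow ((WithLp.equiv 2 (H × H)).symm (x, y)) = z₁ • x + z₂ • y) :
    (∃ p : H × H, (A₁ p.1 - z₁ • p.1) - (A₂ p.2 - z₂ • p.2) = 0 ∧
        ∀ h : H, p ≠ (A₁ h - z₁ • h, A₂ h - z₂ • h)) ↔
      ∃ p : H × H, (-Arow + Dstar ∘L R ∘L Zrow ∘L DA) (DA ((WithLp.equiv 2 (H × H)).symm p)) = 0 ∧
        ∀ h : H, p ≠ (A₁ h - z₁ • h, z₂ • h - A₂ h) := by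
  have hadj : ∀ h : H, adjoint Arow h =
      (WithLp.equiv 2 (H × H)).symm (adjoint A₁ h, adjoint A₂ h) := by
    intro h
    refine ext_inner_right ℂ fun v => ?_
    obtain ⟨⟨x, y⟩, rfl⟩ := (WithLp.equiv 2 (H × H)).symm.surjective v
    rw [adjoint_inner_left, hArow, inner_add_right]
    simp [WithLp.prod_inner_apply, adjoint_inner_left]
  have hAA : Dstar * Dstar = 1 - Arow ∘L adjoint Arow := by
    ext h
    simp [hDstar_sq, hadj, -WithLp.equiv_symm_apply, hArow, sub_sub]
  have hint : Dstar ∘L Arow = Arow ∘L DA := by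
    apply intertwine_of_sq _ _ hDstar_pos hDA_pos
    rw [← comp_assoc, ← mul_def, hAA, ← mul_def DA, hDA_sq, sub_comp, comp_sub, comp_assoc]
    rfl
  have hRinj : Function.Injective ⇑(1 - z₁ • adjoint A₁ - z₂ • adjoint A₂) := by
    intro u v huv
    exact (DFunLike.congr_fun hR₁ u).symm.trans ((congrArg R huv).trans (DFunLike.congr_fun hR₁ v))
  have key : ∀ X : WithLp 2 (H × H),
      (-Arow + Dstar ∘L R ∘L Zrow ∘L DA) (DA X) = 0 ↔ Zrow X - Arow X = 0 := by
    intro X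
    have e1 : Arow (DA X) = Dstar (Arow X) := (DFunLike.congr_fun hint X).symm
    have e2 : DA (DA X) = X - adjoint Arow (Arow X) := DFunLike.congr_fun hDA_sq X
    have e3 : (-Arow + Dstar ∘L R ∘L Zrow ∘L DA) (DA X)
        = Dstar (-Arow X + R (Zrow (X - adjoint Arow (Arow X)))) := by
      simp only [add_apply, neg_apply, comp_apply, e1, e2, map_add, map_neg]
    have e4 : ∀ u, (1 - z₁ • adjoint A₁ - z₂ • adjoint A₂) (R u) = u :=
      fun u => DFunLike.congr_fun hR₂ u
    have e5 : ∀ u, (1 - z₁ • adjoint A₁ - z₂ • adjoint A₂) u = u - Zrow (adjoint Arow u) := by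
      intro u
      rw [hadj, hZrow]
      simp [sub_sub]
    have e6 : (1 - z₁ • adjoint A₁ - z₂ • adjoint A₂)
        (-Arow X + R (Zrow (X - adjoint Arow (Arow X)))) = Zrow X - Arow X := by
      rw [map_add, e4, map_neg, e5, map_sub]; abel
    rw [e3, map_eq_zero_iff Dstar hDstar_inj, ← e6, map_eq_zero_iff _ hRinj]
  constructor
  · rintro ⟨⟨x, y⟩, h0, hne⟩
    refine ⟨(x, -y), ?_, fun h hh => hne h ?_⟩
    · rw [key, hZrow, hArow, ← neg_eq_zero, ← h0]
      simp only [map_neg, smul_neg]; abel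
    · simp only [Prod.mk.injEq] at hh ⊢
      exact ⟨hh.1, by rw [← neg_neg y, hh.2, neg_sub]⟩
  · rintro ⟨⟨x, y⟩, h0, hne⟩
    rw [key, hZrow, hArow] at h0
    refine ⟨(x, -y), ?_, fun h hh => hne h ?_⟩
    · rw [← neg_eq_zero, ← h0]
      simp only [map_neg, smul_neg]; abel
    · simp only [Prod.mk.injEq] at hh ⊢
      exact ⟨hh.1, by rw [← neg_neg y, hh.2, neg_sub]⟩
end

section
/- Let A = (A₁, A₂) be a commuting 2-contraction on H with D_{A*} injective, let λ = (λ₁,λ₂) ∈ 𝔻², λ ≠ 0, and let (z₁,z₂) ∈ 𝔻². If there exists y ≠ 0 in H with (θ_A(z₁,z₂))*(D_{A*}y) = 0, then Φ_λ(z₁,z₂) ∈ σ_T^{(3)}(B₁(λ),B₂(λ)). -/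
/-!
The hypothesis on `θ_A(z)` produces a joint eigenvector of `(A₁*, A₂*)`, and such an eigenvector is
also a joint eigenvector of the adjoints of the components of `Φ_λ(A)`.

From `D_{A*} A = A D_A` (`intertwine`) one gets `θ_A(z) D_A = D_{A*} (1 - Z A*)⁻¹ (Z - A)`. Taking
adjoints, `θ_A(z)* D_{A*} y = 0` gives `(Z - A)* v = 0` for `v = ((1 - Z A*)⁻¹)* D_{A*}² y`, that is
`Aᵢ* v = conj zᵢ • v`; and `v ≠ 0` because `D_{A*}` is injective.

The defect operator of the scalar row `Λ` is `D_Λ = 1 - ((1 - s) / ‖λ‖²) Λ*Λ` (`defect_scalar_row`),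
which makes it possible to evaluate `Φ_λ(A)* v` and to find that it is
`(conj w₁ • v, conj w₂ • v)` with `w = Φ_λ(z)`. Hence `v` is orthogonal to the range of
`(x₁, x₂) ↦ (B₁ - w₁) x₁ - (B₂ - w₂) x₂`, and this map is not surjective.
-/

open ContinuousLinearMap Filter

/-- If `X P² = Q² X` with `P, Q` positive and `Q` injective, then `X P = Q X`. The difference
`Y = X P - Q X` satisfies `Q Y = -Y P`, so `Q` commutes with `Y Y*` and the product `Q Y Y*` is both
positive and negative, hence zero; injectivity of `Q` then gives `Y Y* = 0`. -/
lemma intertwine {E F : Type*} [NormedAddCommGroup E] [InnerProductSpace ℂ E] [CompleteSpace E]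
    [NormedAddCommGroup F] [InnerProductSpace ℂ F] [CompleteSpace F]
    (X : E →L[ℂ] F) (P : E →L[ℂ] E) (Q : F →L[ℂ] F) (hP : 0 ≤ P) (hQ : 0 ≤ Q)
    (hinj : Function.Injective Q) (h : X ∘L (P * P) = (Q * Q) ∘L X) :
    X ∘L P = Q ∘L X := by
  set Y : E →L[ℂ] F := X ∘L P - Q ∘L X with hY
  have hQY : ∀ x, Q (Y x) = -(Y (P x)) := by
    intro x
    have : X (P (P x)) = Q (Q (X x)) := congrArg (fun T : E →L[ℂ] F => T x) h
    simp only [hY, sub_apply, comp_apply, map_sub, this]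
    abel
  have hQpos := (nonneg_iff_isPositive Q).1 hQ
  have hPpos := (nonneg_iff_isPositive P).1 hP
  have hN : 0 ≤ Y ∘L P ∘L adjoint Y := (nonneg_iff_isPositive _).2 (hPpos.conj_adjoint Y)
  have hK : 0 ≤ Y ∘L adjoint Y := by
    rw [nonneg_iff_isPositive]
    exact (isPositive_one (𝕜 := ℂ) (E := E)).conj_adjoint Y
  have hQK : Q * (Y ∘L adjoint Y) = -(Y ∘L P ∘L adjoint Y) := by
    ext x
    simp [hQY]
  have hcomm : Commute Q (Y ∘L adjoint Y) := by
    have hs : star (Q * (Y ∘L adjoint Y)) = Q * (Y ∘L adjoint Y) := by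
      rw [hQK, star_neg, (IsSelfAdjoint.of_nonneg hN).star_eq]
    rw [star_mul, (IsSelfAdjoint.of_nonneg hQ).star_eq, (IsSelfAdjoint.of_nonneg hK).star_eq] at hs
    exact hs.symm
  have hge : 0 ≤ Q * (Y ∘L adjoint Y) := hcomm.mul_nonneg hQ hK
  have hle : Q * (Y ∘L adjoint Y) ≤ 0 := by
    rw [hQK]
    exact neg_nonpos.2 hN
  have h0 : Q * (Y ∘L adjoint Y) = 0 := le_antisymm hle hge
  have hadj : adjoint Y = 0 := by
    ext x
    have h1 : Y (adjoint Y x) = 0 := by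
      apply hinj
      have := congrArg (fun T : F →L[ℂ] F => T x) h0
      simpa using this
    have h2 : inner ℂ (adjoint Y x) (adjoint Y x) = (0 : ℂ) := by
      rw [adjoint_inner_left, h1, inner_zero_right]
    simpa using h2
  have hY0 : Y = 0 := by
    rw [← adjoint_adjoint Y, hadj, map_zero]
  exact sub_eq_zero.1 hY0

lemma adjoint_row {H : Type*} [NormedAddCommGroup H] [InnerProductSpace ℂ H] [CompleteSpace H]
    (X₁ X₂ : H →L[ℂ] H) (X : WithLp 2 (H × H) →L[ℂ] H)
    (hX : ∀ x y : H, X ((WithLp.equiv 2 (H × H)).symm (x, y)) = X₁ x + X₂ y) (h : H) :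
    adjoint X h = (WithLp.equiv 2 (H × H)).symm (adjoint X₁ h, adjoint X₂ h) := by
  refine ext_inner_right ℂ fun q => ?_
  obtain ⟨⟨a, b⟩, rfl⟩ := (WithLp.equiv 2 (H × H)).symm.surjective q
  rw [adjoint_inner_left, hX, inner_add_right, WithLp.prod_inner_apply]
  simp [adjoint_inner_left]

lemma adjoint_scalar_row {H : Type*} [NormedAddCommGroup H] [InnerProductSpace ℂ H]
    [CompleteSpace H] (a b : ℂ) (X : WithLp 2 (H × H) →L[ℂ] H)
    (hX : ∀ x y : H, X ((WithLp.equiv 2 (H × H)).symm (x, y)) = a • x + b • y) (h : H) :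
    adjoint X h = (WithLp.equiv 2 (H × H)).symm
      ((starRingEnd ℂ) a • h, (starRingEnd ℂ) b • h) := by
  rw [adjoint_row (a • 1) (b • 1) X (by simpa using hX)]
  simp [← star_eq_adjoint]

lemma sq_one_sub_smul {R : Type*} [Ring R] [Algebra ℝ R] (K : R) (m t : ℝ) (hm : m ≠ 0)
    (hK : K * K = m • K) :
    (1 - ((1 - t) / m) • K) * (1 - ((1 - t) / m) • K) = 1 - ((1 - t ^ 2) / m) • K := by
  simp only [sub_mul, mul_sub, one_mul, mul_one, smul_mul_smul_comm, hK, smul_smul]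
  have : (1 - t ^ 2) / m = (1 - t) / m + (1 - t) / m - (1 - t) / m * ((1 - t) / m) * m := by
    field_simp
    ring
  rw [this, sub_smul, add_smul]
  abel

/-- For a row `L` with `L L* = m` and `s² = 1 - m`, the defect operator is
`1 - ((1 - s) / m) L*L`. Its positivity is seen by writing it as a square, with `√s` in place of
`s`. -/
lemma defect_scalar_row {E F : Type*} [NormedAddCommGroup E] [InnerProductSpace ℂ E]
    [CompleteSpace E] [NormedAddCommGroup F] [InnerProductSpace ℂ F] [CompleteSpace F]
    (L : E →L[ℂ] F) (D : E →L[ℂ] E) (m s : ℝ) (hm : m ≠ 0) (hs : 0 ≤ s) (hsm : s ^ 2 = 1 - m)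
    (hL : ∀ x, L (adjoint L x) = m • x) (hD : 0 ≤ D) (hsq : D * D = 1 - adjoint L ∘L L) :
    D = 1 - ((1 - s) / m) • (adjoint L ∘L L) := by
  have hK : (adjoint L ∘L L) * (adjoint L ∘L L) = m • (adjoint L ∘L L) := by
    ext x
    simp [hL]
  have hself : IsSelfAdjoint (adjoint L ∘L L) := by
    rw [isSelfAdjoint_iff', adjoint_comp, adjoint_adjoint]
  have hpos : 0 ≤ 1 - ((1 - s) / m) • (adjoint L ∘L L) := by
    have h := sq_one_sub_smul _ m (√s) hm hK
    rw [Real.sq_sqrt hs] at h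
    rw [← h]
    have hsa : IsSelfAdjoint (1 - ((1 - √s) / m) • (adjoint L ∘L L)) :=
      (IsSelfAdjoint.one _).sub ((IsSelfAdjoint.all _).smul hself)
    have := star_mul_self_nonneg (1 - ((1 - √s) / m) • (adjoint L ∘L L))
    rwa [hsa.star_eq] at this
  have h := sq_one_sub_smul _ m s hm hK
  rw [hsm, sub_sub_cancel, div_self hm, one_smul, ← hsq] at h
  rw [← CFC.sqrt_unique rfl hD, ← CFC.sqrt_unique h hpos]

set_option maxHeartbeats 1000000 in
theorem sigma_three_phi_sufficient
    {H : Type*} [NormedAddCommGroup H] [InnerProductSpace ℂ H] [CompleteSpace H]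
    (A₁ A₂ : H →L[ℂ] H)
    (hcomm : A₁ * A₂ = A₂ * A₁)
    (hcontr : A₁ * adjoint A₁ + A₂ * adjoint A₂ ≤ 1)
    (Dstar : H →L[ℂ] H) (hDstar_pos : 0 ≤ Dstar)
    (hDstar_sq : Dstar * Dstar = 1 - A₁ * adjoint A₁ - A₂ * adjoint A₂)
    (hDstar_inj : Function.Injective ⇑Dstar)
    (Arow : WithLp 2 (H × H) →L[ℂ] H)
    (hArow : ∀ x y : H, Arow ((WithLp.equiv 2 (H × H)).symm (x, y)) = A₁ x + A₂ y)
    (DA : WithLp 2 (H × H) →L[ℂ] WithLp 2 (H × H)) (hDA_pos : 0 ≤ DA)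
    (hDA_sq : DA * DA = 1 - (adjoint Arow) ∘L Arow)
    (μ₁ μ₂ : ℂ) (hμ : ‖μ₁‖ ^ 2 + ‖μ₂‖ ^ 2 < 1) (hμ0 : (μ₁, μ₂) ≠ ((0 : ℂ), (0 : ℂ)))
    (s : ℝ) (hs : s = Real.sqrt (1 - ‖μ₁‖ ^ 2 - ‖μ₂‖ ^ 2))
    (Lrow : WithLp 2 (H × H) →L[ℂ] H)
    (hLrow : ∀ x y : H, Lrow ((WithLp.equiv 2 (H × H)).symm (x, y)) = μ₁ • x + μ₂ • y)
    (DL : WithLp 2 (H × H) →L[ℂ] WithLp 2 (H × H)) (hDL_pos : 0 ≤ DL)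
    (hDL_sq : DL * DL = 1 - (adjoint Lrow) ∘L Lrow)
    (T₁ : H →L[ℂ] H) (hT₁ : T₁ * (1 - Arow ∘L adjoint Lrow) = 1)
    (hT₁' : (1 - Arow ∘L adjoint Lrow) * T₁ = 1)
    (B₁ B₂ : H →L[ℂ] H)
    (hB : ∀ x y : H, (Lrow - (s : ℂ) • (T₁ ∘L Arow ∘L DL)) ((WithLp.equiv 2 (H × H)).symm (x, y)) = B₁ x + B₂ y)
    (z₁ z₂ : ℂ) (hz : ‖z₁‖ ^ 2 + ‖z₂‖ ^ 2 < 1)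
    (R : H →L[ℂ] H) (hR₁ : R * (1 - z₁ • adjoint A₁ - z₂ • adjoint A₂) = 1)
    (hR₂ : (1 - z₁ • adjoint A₁ - z₂ • adjoint A₂) * R = 1)
    (Zrow : WithLp 2 (H × H) →L[ℂ] H)
    (hZrow : ∀ x y : H, Zrow ((WithLp.equiv 2 (H × H)).symm (x, y)) = z₁ • x + z₂ • y)
    (ip : ℂ) (hip : ip = z₁ * (starRingEnd ℂ) μ₁ + z₂ * (starRingEnd ℂ) μ₂)
    (w₁ w₂ : ℂ)
    (hw₁ : w₁ = μ₁ - ((s : ℂ) / (1 - ip)) * (z₁ - (1 - (s : ℂ)) * (ip / ((‖μ₁‖ ^ 2 + ‖μ₂‖ ^ 2 : ℝ) : ℂ)) * μ₁))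
    (hw₂ : w₂ = μ₂ - ((s : ℂ) / (1 - ip)) * (z₂ - (1 - (s : ℂ)) * (ip / ((‖μ₁‖ ^ 2 + ‖μ₂‖ ^ 2 : ℝ) : ℂ)) * μ₂))
    (y : H) (hy : y ≠ 0)
    (hθ : adjoint (-Arow + Dstar ∘L R ∘L Zrow ∘L DA) (Dstar y) = 0) :
    ¬ Function.Surjective (fun p : H × H => (B₁ p.1 - w₁ • p.1) - (B₂ p.2 - w₂ • p.2)) := by
  have hAadj := adjoint_row A₁ A₂ Arow hArow
  have hLadj := adjoint_scalar_row μ₁ μ₂ Lrow hLrow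
  have hZadj := adjoint_scalar_row z₁ z₂ Zrow hZrow
  have hAA : Arow ∘L adjoint Arow = A₁ * adjoint A₁ + A₂ * adjoint A₂ := by
    ext x
    simp only [comp_apply, hAadj, hArow]
    rfl
  have hDA : Arow ∘L DA = Dstar ∘L Arow := by
    apply intertwine Arow DA Dstar hDA_pos hDstar_pos hDstar_inj
    rw [hDA_sq, hDstar_sq, sub_sub, ← hAA]
    ext x
    simp
  have hZA : z₁ • adjoint A₁ + z₂ • adjoint A₂ = Zrow ∘L adjoint Arow := by
    ext x
    simp only [comp_apply, hAadj, hZrow]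
    rfl
  rw [sub_sub, hZA] at hR₁ hR₂
  -- `θ_A(z) D_A = D_{A*} (1 - Z A*)⁻¹ (Z - A)`
  have hθD : (-Arow + Dstar ∘L R ∘L Zrow ∘L DA) ∘L DA = Dstar ∘L R ∘L (Zrow - Arow) := by
    ext x
    have e1 : Arow (DA x) = Dstar (Arow x) := congrArg (fun T => T x) hDA
    have e2 : DA (DA x) = x - adjoint Arow (Arow x) := congrArg (fun T => T x) hDA_sq
    have e3 : R (Arow x - Zrow (adjoint Arow (Arow x))) = Arow x :=
      congrArg (fun T : H →L[ℂ] H => T (Arow x)) hR₁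
    simp only [add_apply, neg_apply, comp_apply, sub_apply, e1, e2]
    have e4 := congrArg Dstar e3
    simp only [map_sub] at e4 ⊢
    rw [← e4]
    abel
  have hDs : adjoint Dstar = Dstar := (IsSelfAdjoint.of_nonneg hDstar_pos).adjoint_eq
  set v : H := adjoint R (Dstar (Dstar y)) with hv
  have hZAv : adjoint Zrow v = adjoint Arow v := by
    have h := congrArg (fun T => adjoint T (Dstar y)) hθD
    simp only [adjoint_comp, comp_apply, hθ, map_zero, hDs, map_sub, sub_apply] at h
    exact (sub_eq_zero.1 h.symm)
  have hv0 : v ≠ 0 := by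
    intro h0
    have h1 : adjoint (R * (1 - Zrow ∘L adjoint Arow)) = 1 := by
      rw [hR₁, ← star_eq_adjoint, star_one]
    have h3 : adjoint (1 - Zrow ∘L adjoint Arow) (adjoint R (Dstar (Dstar y))) =
        Dstar (Dstar y) := by
      have := congrArg (fun T : H →L[ℂ] H => T (Dstar (Dstar y))) h1
      rw [mul_def, adjoint_comp] at this
      exact this
    rw [← hv, h0, map_zero] at h3
    exact hy (hDstar_inj (hDstar_inj (by rw [← h3, map_zero, map_zero])))
  have hm : ‖μ₁‖ ^ 2 + ‖μ₂‖ ^ 2 ≠ 0 := by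
    intro h
    apply hμ0
    have h1 : ‖μ₁‖ ^ 2 = 0 := by nlinarith [sq_nonneg ‖μ₁‖, sq_nonneg ‖μ₂‖]
    have h2 : ‖μ₂‖ ^ 2 = 0 := by nlinarith [sq_nonneg ‖μ₁‖, sq_nonneg ‖μ₂‖]
    simpa using And.intro h1 h2
  have hLL : ∀ x, Lrow (adjoint Lrow x) = (‖μ₁‖ ^ 2 + ‖μ₂‖ ^ 2) • x := by
    intro x
    rw [hLadj, hLrow, smul_smul, smul_smul, ← add_smul, Complex.mul_conj', Complex.mul_conj',
      ← Complex.coe_smul]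
    push_cast
    rfl
  have hs0 : 0 ≤ s := hs ▸ Real.sqrt_nonneg _
  have hs2 : s ^ 2 = 1 - (‖μ₁‖ ^ 2 + ‖μ₂‖ ^ 2) := by
    rw [hs, Real.sq_sqrt (by linarith)]
    ring
  have hDL := defect_scalar_row Lrow DL _ s hm hs0 hs2 hLL hDL_pos hDL_sq
  have hDLadj : adjoint DL = DL := (IsSelfAdjoint.of_nonneg hDL_pos).adjoint_eq
  set c : ℂ := (starRingEnd ℂ) ip with hc
  have hLZ : Lrow (adjoint Zrow v) = c • v := by
    rw [hZadj, hLrow, smul_smul, smul_smul, ← add_smul, hc, hip]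
    congr 1
    simp only [map_add, map_mul, Complex.conj_conj]
    ring
  have hTv : (1 - c) • adjoint T₁ v = v := by
    have h : adjoint ((1 - Arow ∘L adjoint Lrow) * T₁) v = v := by
      rw [hT₁', ← star_eq_adjoint, star_one]
      rfl
    rw [mul_def, adjoint_comp, comp_apply, map_sub, adjoint_comp, adjoint_adjoint,
      ← star_eq_adjoint 1, star_one, sub_apply, comp_apply, ← hZAv, hLZ] at h
    rw [← map_smul, sub_smul, one_smul]
    exact h
  have hc1 : 1 - c ≠ 0 := by
    intro h
    rw [h, zero_smul] at hTv
    exact hv0 hTv.symm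
  have hTv' : adjoint T₁ v = (1 - c)⁻¹ • v := by
    conv_rhs => rw [← hTv]
    rw [inv_smul_smul₀ hc1]
  have hΦ : adjoint (Lrow - (s : ℂ) • (T₁ ∘L Arow ∘L DL)) v =
      (WithLp.equiv 2 (H × H)).symm ((starRingEnd ℂ) w₁ • v, (starRingEnd ℂ) w₂ • v) := by
    have hD : DL (adjoint Zrow v) = adjoint Zrow v -
        ((1 - (s : ℂ)) / ((‖μ₁‖ ^ 2 + ‖μ₂‖ ^ 2 : ℝ) : ℂ) * c) • adjoint Lrow v := by
      rw [hDL, sub_apply, smul_apply, comp_apply, hLZ, map_smul, ← Complex.coe_smul,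
        smul_smul]
      push_cast
      rfl
    rw [map_sub, map_smulₛₗ, adjoint_comp, adjoint_comp, hDLadj]
    simp only [sub_apply, smul_apply, comp_apply, hTv', map_smul, ← hZAv, hD, Complex.conj_ofReal]
    rw [hLadj, hZadj, hw₁, hw₂]
    apply (WithLp.equiv 2 (H × H)).injective
    simp only [map_sub, map_mul, map_div₀, map_one, Complex.conj_ofReal, ← hc]
    ext
    · simp only [WithLp.equiv_apply, WithLp.equiv_symm_apply, WithLp.ofLp_sub, WithLp.ofLp_smul,
        Prod.fst_sub, Prod.smul_fst]
      module
    · simp only [WithLp.equiv_apply, WithLp.equiv_symm_apply, WithLp.ofLp_sub, WithLp.ofLp_smul,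
        Prod.snd_sub, Prod.smul_snd]
      module
  have hinner : ∀ x x' : H, inner ℂ v (B₁ x + B₂ x') = w₁ * inner ℂ v x + w₂ * inner ℂ v x' := by
    intro x x'
    rw [← hB, ← adjoint_inner_left, hΦ, WithLp.prod_inner_apply]
    simp [inner_smul_left]
  intro hsurj
  obtain ⟨⟨p, q⟩, hpq⟩ := hsurj v
  apply hv0
  rw [← inner_self_eq_zero (𝕜 := ℂ)]
  have h := hinner p (-q)
  rw [map_neg, ← sub_eq_add_neg, inner_neg_right, inner_sub_right] at h
  have h' := congrArg (fun u => inner ℂ v u) hpq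
  simp only [inner_sub_right, inner_smul_right] at h'
  rw [← h']
  linear_combination h
end

section
/- Let A = (A₁, A₂) be a pure commuting 2-contraction on H with D_{A*} injective, let λ = (λ₁,λ₂) ∈ 𝔻², λ ≠ 0, assume the pair (B₁(λ),B₂(λ)) is also pure, and let (z₁,z₂) ∈ 𝔻². Write (w₁,w₂) = Φ_λ(z₁,z₂). Then Φ_λ(z₁,z₂) ∈ σ_T^{(2)}(B₁(λ),B₂(λ)) if and only if there exists X ∈ H ⊕ H such that θ_A(z₁,z₂)(D_A((1_{H⊕H} − Λ*A)⁻¹(D_Λ X))) = 0 and X ≠ ((B₁(λ) − w₁)h, (w₂ − B₂(λ))h) for every h ∈ H. -/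
/-!
Write `Z` for the row operator of `(z₁, z₂)`, `W` for that of `(w₁, w₂)` and `B` for `Φ_λ(A)`.
Two operator identities carry the proof.

* `θ_A(z) D_A = D_{A*} (1 - Z A*)⁻¹ (Z - A)`, which follows from the intertwining relation
  `A D_A = D_{A*} A`. As `D_{A*}` is injective, `θ_A(z) D_A y = 0` exactly when `Z y = A y`.
* `B - W = (s / (1 - ⟨z, λ⟩)) (Z - A) (1 - Λ* A)⁻¹ D_Λ`, which follows from the push-through
  identity `(1 - A Λ*)⁻¹ A = A (1 - Λ* A)⁻¹` and the scalar version
  `W = Λ - (s / (1 - ⟨z, λ⟩)) Z D_Λ` of the definition of `Φ_λ`. The latter rests on the closed form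
  `D_Λ = 1 - (1 + s)⁻¹ Λ* Λ`, where `(1 + s)⁻¹ = (1 - s) / ‖λ‖²`.

Hence the condition on `X` in terms of `θ_A` says `B X = W X`, and the sign change
`(x₁, x₂) ↦ (x₁, -x₂)` turns solutions of one side into solutions of the other.
-/

open ContinuousLinearMap Filter

/-- Positive square roots intertwine whatever their squares intertwine. With `X = T D - E T` one has
`E X = -X D`, so `X* X D = -X* E X` is self-adjoint and nonpositive; being a product of commuting
positive operators it is also nonnegative. Thus `X D = 0 = E X`, which forces `X X* X = 0`. -/
theorem comp_eq_of_sq_intertwine {K H : Type*}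
    [NormedAddCommGroup H] [InnerProductSpace ℂ H] [CompleteSpace H]
    [NormedAddCommGroup K] [InnerProductSpace ℂ K] [CompleteSpace K]
    (T : K →L[ℂ] H) (D : K →L[ℂ] K) (E : H →L[ℂ] H) (hD : 0 ≤ D) (hE : 0 ≤ E)
    (h : T ∘L (D * D) = (E * E) ∘L T) : T ∘L D = E ∘L T := by
  obtain ⟨X, hX⟩ : ∃ X, X = T ∘L D - E ∘L T := ⟨_, rfl⟩
  have hDsa : adjoint D = D := hD.isSelfAdjoint
  have hEsa : adjoint E = E := hE.isSelfAdjoint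
  have hEX : E ∘L X = -(X ∘L D) := by
    ext v
    have hv := congrArg (fun S : K →L[ℂ] H => S v) h
    simp only [comp_apply, mul_apply_eq_comp] at hv
    simp [hX, hv]
  have hXs : adjoint X = D ∘L adjoint T - adjoint T ∘L E := by
    rw [hX, map_sub, adjoint_comp, adjoint_comp, hDsa, hEsa]
  have hP : 0 ≤ adjoint X ∘L X := by
    rw [nonneg_iff_isPositive]; exact isPositive_adjoint_comp_self X
  have hN : 0 ≤ adjoint X ∘L E ∘L X := by
    rw [nonneg_iff_isPositive]
    exact ((nonneg_iff_isPositive E).1 hE).adjoint_conj X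
  have hPD : (adjoint X ∘L X) * D = -(adjoint X ∘L E ∘L X) := by
    rw [hEX]; ext v; simp
  have hcom : Commute (adjoint X ∘L X) D := by
    have hsa : adjoint ((adjoint X ∘L X) * D) = (adjoint X ∘L X) * D := by
      rw [hPD, map_neg]
      congr 1
      exact hN.isSelfAdjoint
    have h2 : adjoint ((adjoint X ∘L X) * D) = D * (adjoint X ∘L X) := by
      rw [mul_def, adjoint_comp, adjoint_comp, adjoint_adjoint, hDsa, mul_def]
    exact (hsa.symm.trans h2)
  have hzero : (adjoint X ∘L X) * D = 0 := by
    apply le_antisymm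
    · rw [hPD]; exact neg_nonpos.2 hN
    · exact hcom.mul_nonneg hP hD
  have hXD : ∀ v, X (D v) = 0 := by
    intro v
    have h1 : adjoint X (X (D v)) = 0 := congrArg (fun S : K →L[ℂ] K => S v) hzero
    have h2 : inner ℂ (X (D v)) (X (D v)) = 0 := by
      rw [← adjoint_inner_left, h1, inner_zero_left]
    exact inner_self_eq_zero.1 h2
  have hEX0 : ∀ v, E (X v) = 0 := by
    intro v
    have := congrArg (fun S : K →L[ℂ] H => S v) hEX
    simpa [hXD] using this
  have hX0 : ∀ v, X v = 0 := by
    intro v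
    have h1 : X (adjoint X (X v)) = 0 := by
      rw [hXs]; simp [hXD, hEX0]
    have h2 : adjoint X (X v) = 0 := by
      rw [← inner_self_eq_zero (𝕜 := ℂ), adjoint_inner_left, h1, inner_zero_right]
    rw [← inner_self_eq_zero (𝕜 := ℂ), ← adjoint_inner_left, h2, inner_zero_left]
  have : X = 0 := ext hX0
  rw [hX] at this
  exact sub_eq_zero.1 this

theorem adjoint_row_apply_s19 {H : Type*} [NormedAddCommGroup H] [InnerProductSpace ℂ H]
    [CompleteSpace H] (C₁ C₂ : H →L[ℂ] H) (C : WithLp 2 (H × H) →L[ℂ] H)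
    (hC : ∀ x y : H, C ((WithLp.equiv 2 (H × H)).symm (x, y)) = C₁ x + C₂ y) (h : H) :
    adjoint C h = (WithLp.equiv 2 (H × H)).symm (adjoint C₁ h, adjoint C₂ h) := by
  refine ext_inner_left ℂ fun v => ?_
  obtain ⟨⟨x, y⟩, rfl⟩ := (WithLp.equiv 2 (H × H)).symm.surjective v
  rw [adjoint_inner_right, hC, WithLp.prod_inner_apply, inner_add_left]
  simp [adjoint_inner_right]

/-- The closed form of `D_Λ` when `Λ Λ*` is the scalar `1 - s²`. The right-hand side is positive
because it equals `(1 + s)⁻¹ (s + D_Λ²)`. -/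
theorem defect_scalar_row_s19 {H K : Type*} [NormedAddCommGroup H] [InnerProductSpace ℂ H]
    [CompleteSpace H] [NormedAddCommGroup K] [InnerProductSpace ℂ K] [CompleteSpace K]
    (L : K →L[ℂ] H) (D : K →L[ℂ] K) (hD : 0 ≤ D)
    (hD2 : D * D = 1 - adjoint L ∘L L) (s : ℝ) (hs : 0 ≤ s)
    (hL : ∀ h, L (adjoint L h) = (1 - (s : ℂ) ^ 2) • h) :
    D = 1 - ((1 + (s : ℂ))⁻¹) • (adjoint L ∘L L) := by
  have hs1 : (1 + (s : ℂ)) ≠ 0 := by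
    have : (1 + s) ≠ 0 := by positivity
    exact_mod_cast this
  have hpos : (0 : K →L[ℂ] K) ≤ 1 - ((1 + (s : ℂ))⁻¹) • (adjoint L ∘L L) := by
    have e : 1 - ((1 + (s : ℂ))⁻¹) • (adjoint L ∘L L) =
        ((1 + (s : ℂ))⁻¹) • ((s : ℂ) • 1 + D * D) := by
      rw [hD2]
      ext v
      simp only [sub_apply, smul_apply, one_apply_eq_self, add_apply]
      match_scalars <;> field_simp
      ring
    rw [e, nonneg_iff_isPositive]
    have hDD : (D * D).IsPositive := by
      rw [← nonneg_iff_isPositive]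
      exact (Commute.refl D).mul_nonneg hD hD
    have h1 : ((s : ℂ) • (1 : K →L[ℂ] K)).IsPositive :=
      isPositive_one.smul_of_nonneg (by exact_mod_cast hs)
    refine (h1.add hDD).smul_of_nonneg ?_
    have : (0 : ℝ) ≤ (1 + s)⁻¹ := by positivity
    exact_mod_cast this
  rw [← CFC.mul_self_eq_mul_self_iff _ _ hD hpos, hD2]
  ext v
  simp only [sub_apply, smul_apply, one_apply_eq_self, mul_apply_eq_comp, comp_apply, map_sub,
    map_smul, hL]
  match_scalars <;> field_simp
  ring

/-- The factorization `θ_A(z) D_A = D_{A*} (1 - Z A*)⁻¹ (Z - A)`. -/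
theorem charFun_comp_defect {H K : Type*} [NormedAddCommGroup H] [InnerProductSpace ℂ H]
    [CompleteSpace H] [NormedAddCommGroup K] [InnerProductSpace ℂ K] [CompleteSpace K]
    (A Z : K →L[ℂ] H) (D : K →L[ℂ] K) (E R : H →L[ℂ] H) (hD : 0 ≤ D) (hE : 0 ≤ E)
    (hD2 : D * D = 1 - adjoint A ∘L A) (hE2 : E * E = 1 - A ∘L adjoint A)
    (hR : R * (1 - Z ∘L adjoint A) = 1) (y : K) :
    (-A + E ∘L R ∘L Z ∘L D) (D y) = E (R (Z y - A y)) := by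
  have hAD : A ∘L D = E ∘L A := by
    apply comp_eq_of_sq_intertwine A D E hD hE
    rw [hD2, hE2]; ext v; simp
  have h1 : A (D y) = E (A y) := congrArg (fun S : K →L[ℂ] H => S y) hAD
  have h2 : D (D y) = y - adjoint A (A y) := congrArg (fun S : K →L[ℂ] K => S y) hD2
  have h3 : R (A y - Z (adjoint A (A y))) = A y := congrArg (fun S : H →L[ℂ] H => S (A y)) hR
  simp only [add_apply, neg_apply, comp_apply, h1, h2]
  rw [map_sub] at h3
  simp only [map_sub]
  rw [eq_add_of_sub_eq h3]
  simp only [map_add]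
  abel

theorem sigma_two_phi_char
    {H : Type*} [NormedAddCommGroup H] [InnerProductSpace ℂ H] [CompleteSpace H]
    (A₁ A₂ : H →L[ℂ] H)
    (hcomm : A₁ * A₂ = A₂ * A₁)
    (hcontr : A₁ * adjoint A₁ + A₂ * adjoint A₂ ≤ 1)
    (hpure : ∀ x : H, Tendsto (fun n => ((A₁ * adjoint A₁ + A₂ * adjoint A₂) ^ n) x) atTop (nhds 0))
    (Dstar : H →L[ℂ] H) (hDstar_pos : 0 ≤ Dstar)
    (hDstar_sq : Dstar * Dstar = 1 - A₁ * adjoint A₁ - A₂ * adjoint A₂)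
    (hDstar_inj : Function.Injective ⇑Dstar)
    (Arow : WithLp 2 (H × H) →L[ℂ] H)
    (hArow : ∀ x y : H, Arow ((WithLp.equiv 2 (H × H)).symm (x, y)) = A₁ x + A₂ y)
    (DA : WithLp 2 (H × H) →L[ℂ] WithLp 2 (H × H)) (hDA_pos : 0 ≤ DA)
    (hDA_sq : DA * DA = 1 - (adjoint Arow) ∘L Arow)
    (μ₁ μ₂ : ℂ) (hμ : ‖μ₁‖ ^ 2 + ‖μ₂‖ ^ 2 < 1) (hμ0 : (μ₁, μ₂) ≠ ((0 : ℂ), (0 : ℂ)))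
    (s : ℝ) (hs : s = Real.sqrt (1 - ‖μ₁‖ ^ 2 - ‖μ₂‖ ^ 2))
    (Lrow : WithLp 2 (H × H) →L[ℂ] H)
    (hLrow : ∀ x y : H, Lrow ((WithLp.equiv 2 (H × H)).symm (x, y)) = μ₁ • x + μ₂ • y)
    (DL : WithLp 2 (H × H) →L[ℂ] WithLp 2 (H × H)) (hDL_pos : 0 ≤ DL)
    (hDL_sq : DL * DL = 1 - (adjoint Lrow) ∘L Lrow)
    (T₁ : H →L[ℂ] H) (hT₁ : T₁ * (1 - Arow ∘L adjoint Lrow) = 1)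
    (hT₁' : (1 - Arow ∘L adjoint Lrow) * T₁ = 1)
    (S₂ : WithLp 2 (H × H) →L[ℂ] WithLp 2 (H × H))
    (hS₂ : S₂ * (1 - (adjoint Lrow) ∘L Arow) = 1) (hS₂' : (1 - (adjoint Lrow) ∘L Arow) * S₂ = 1)
    (B₁ B₂ : H →L[ℂ] H)
    (hB : ∀ x y : H, (Lrow - (s : ℂ) • (T₁ ∘L Arow ∘L DL)) ((WithLp.equiv 2 (H × H)).symm (x, y)) = B₁ x + B₂ y)
    (hBpure : ∀ x : H, Tendsto (fun n => ((B₁ * adjoint B₁ + B₂ * adjoint B₂) ^ n) x) atTop (nhds 0))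
    (z₁ z₂ : ℂ) (hz : ‖z₁‖ ^ 2 + ‖z₂‖ ^ 2 < 1)
    (R : H →L[ℂ] H) (hR₁ : R * (1 - z₁ • adjoint A₁ - z₂ • adjoint A₂) = 1)
    (hR₂ : (1 - z₁ • adjoint A₁ - z₂ • adjoint A₂) * R = 1)
    (Zrow : WithLp 2 (H × H) →L[ℂ] H)
    (hZrow : ∀ x y : H, Zrow ((WithLp.equiv 2 (H × H)).symm (x, y)) = z₁ • x + z₂ • y)
    (ip : ℂ) (hip : ip = z₁ * (starRingEnd ℂ) μ₁ + z₂ * (starRingEnd ℂ) μ₂)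
    (w₁ w₂ : ℂ)
    (hw₁ : w₁ = μ₁ - ((s : ℂ) / (1 - ip)) * (z₁ - (1 - (s : ℂ)) * (ip / ((‖μ₁‖ ^ 2 + ‖μ₂‖ ^ 2 : ℝ) : ℂ)) * μ₁))
    (hw₂ : w₂ = μ₂ - ((s : ℂ) / (1 - ip)) * (z₂ - (1 - (s : ℂ)) * (ip / ((‖μ₁‖ ^ 2 + ‖μ₂‖ ^ 2 : ℝ) : ℂ)) * μ₂)) :
    (∃ p : H × H, (B₁ p.1 - w₁ • p.1) - (B₂ p.2 - w₂ • p.2) = 0 ∧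
        ∀ h : H, p ≠ (B₁ h - w₁ • h, B₂ h - w₂ • h)) ↔
      ∃ p : H × H, (-Arow + Dstar ∘L R ∘L Zrow ∘L DA) (DA (S₂ (DL ((WithLp.equiv 2 (H × H)).symm p)))) = 0 ∧
        ∀ h : H, p ≠ (B₁ h - w₁ • h, w₂ • h - B₂ h) := by
  -- `1 - ⟨z, λ⟩ ≠ 0` by the Cauchy–Schwarz inequality, in the form `|⟨z, λ⟩| ≤ (‖z‖² + ‖λ‖²) / 2`.
  have hip1 : 1 - ip ≠ 0 := by
    intro h0
    have hn : ‖ip‖ = 1 := by rw [← sub_eq_zero.1 h0]; simp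
    have hle : ‖ip‖ ≤ ‖z₁‖ * ‖μ₁‖ + ‖z₂‖ * ‖μ₂‖ := by
      rw [hip]
      refine (norm_add_le _ _).trans ?_
      simp
    nlinarith [sq_nonneg (‖z₁‖ - ‖μ₁‖), sq_nonneg (‖z₂‖ - ‖μ₂‖)]
  have hspos : 0 < s := by rw [hs]; apply Real.sqrt_pos.2; linarith
  have hs2 : s ^ 2 = 1 - ‖μ₁‖ ^ 2 - ‖μ₂‖ ^ 2 := by rw [hs]; apply Real.sq_sqrt; linarith
  have hsC : (s : ℂ) ≠ 0 := by exact_mod_cast hspos.ne'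
  have hs1C : (1 + (s : ℂ)) ≠ 0 := by
    have : (1 + s) ≠ 0 := by positivity
    exact_mod_cast this
  have hm0 : ‖μ₁‖ ^ 2 + ‖μ₂‖ ^ 2 ≠ 0 := by
    intro h0
    apply hμ0
    have h1 : ‖μ₁‖ = 0 := by nlinarith [sq_nonneg ‖μ₁‖, sq_nonneg ‖μ₂‖]
    have h2 : ‖μ₂‖ = 0 := by nlinarith [sq_nonneg ‖μ₁‖, sq_nonneg ‖μ₂‖]
    rw [norm_eq_zero.1 h1, norm_eq_zero.1 h2]
  have hmC : ((‖μ₁‖ ^ 2 + ‖μ₂‖ ^ 2 : ℝ) : ℂ) = 1 - (s : ℂ) ^ 2 := by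
    have : ‖μ₁‖ ^ 2 + ‖μ₂‖ ^ 2 = 1 - s ^ 2 := by linarith
    rw [this]; push_cast; ring
  have hs1C' : (1 - (s : ℂ)) ≠ 0 := by
    intro h0
    have : (1 - (s : ℂ) ^ 2) ≠ 0 := by rw [← hmC]; exact_mod_cast hm0
    exact this (by linear_combination (1 + (s : ℂ)) * h0)
  have hadjA := adjoint_row_apply_s19 A₁ A₂ Arow hArow
  have hadjL : ∀ h, adjoint Lrow h = (WithLp.equiv 2 (H × H)).symm
      ((starRingEnd ℂ) μ₁ • h, (starRingEnd ℂ) μ₂ • h) := by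
    intro h
    rw [adjoint_row_apply_s19 (μ₁ • 1) (μ₂ • 1) Lrow (by simpa using hLrow) h]
    simp only [map_smulₛₗ, one_def, adjoint_id]
    rfl
  have hLL : ∀ h, Lrow (adjoint Lrow h) = (1 - (s : ℂ) ^ 2) • h := by
    intro h
    rw [hadjL, hLrow, smul_smul, smul_smul, ← add_smul, Complex.mul_conj', Complex.mul_conj', ← hmC]
    push_cast
    rfl
  have hZL : ∀ h, Zrow (adjoint Lrow h) = ip • h := by
    intro h
    rw [hadjL, hZrow, smul_smul, smul_smul, ← add_smul, hip]
  have hDL := defect_scalar_row_s19 Lrow DL hDL_pos hDL_sq s hspos.le hLL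
  have hθ : ∀ y, (-Arow + Dstar ∘L R ∘L Zrow ∘L DA) (DA y) = Dstar (R (Zrow y - Arow y)) := by
    apply charFun_comp_defect Arow Zrow DA Dstar R hDA_pos hDstar_pos hDA_sq
    · rw [hDstar_sq]
      ext v
      simp only [sub_apply, comp_apply, hadjA, hArow, mul_apply_eq_comp]
      abel
    · refine Eq.trans ?_ hR₁
      congr 1
      ext v
      simp only [sub_apply, comp_apply, hadjA, hZrow, smul_apply]
      abel
  have hθ0 : ∀ y, (-Arow + Dstar ∘L R ∘L Zrow ∘L DA) (DA y) = 0 ↔ Zrow y - Arow y = 0 := by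
    intro y
    rw [hθ]
    constructor
    · intro h0
      have h1 : R (Zrow y - Arow y) = 0 := hDstar_inj (by rw [h0, map_zero])
      have h2 := congrArg (fun S : H →L[ℂ] H => S (Zrow y - Arow y)) hR₂
      simp only [mul_apply_eq_comp, h1, map_zero, one_apply_eq_self] at h2
      exact h2.symm
    · intro h0; rw [h0, map_zero, map_zero]
  have hBW : ∀ x y : H, (B₁ x + B₂ y) - (w₁ • x + w₂ • y) =
      ((s : ℂ) / (1 - ip)) •
        (Zrow (S₂ (DL ((WithLp.equiv 2 (H × H)).symm (x, y)))) -
          Arow (S₂ (DL ((WithLp.equiv 2 (H × H)).symm (x, y))))) := by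
    intro x y
    rw [← hB]
    obtain ⟨v, hv⟩ : ∃ v, v = (WithLp.equiv 2 (H × H)).symm (x, y) := ⟨_, rfl⟩
    obtain ⟨u, hu⟩ : ∃ u, u = S₂ (DL v) := ⟨_, rfl⟩
    rw [← hv, ← hu]
    have hDLv : DL v = u - adjoint Lrow (Arow u) := by
      have := congrArg (fun S : WithLp 2 (H × H) →L[ℂ] WithLp 2 (H × H) => S (DL v)) hS₂'
      simp only [mul_apply_eq_comp, ← hu, one_apply_eq_self] at this
      rw [← this]; simp
    have hTA : T₁ (Arow (DL v)) = Arow u := by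
      have := congrArg (fun S : H →L[ℂ] H => S (Arow u)) hT₁
      rw [hDLv, map_sub]
      simpa using this
    have hZD : Zrow (DL v) = Zrow u - ip • Arow u := by rw [hDLv, map_sub, hZL]
    have hZD' : Zrow (DL v) = Zrow v - (1 + (s : ℂ))⁻¹ • ip • Lrow v := by
      conv_lhs => rw [hDL]
      simp [hZL]
    have hW : w₁ • x + w₂ • y = Lrow v - ((s : ℂ) / (1 - ip)) • Zrow (DL v) := by
      rw [hZD', hv, hZrow, hLrow, hw₁, hw₂, hmC,
        show (1 - (s : ℂ) ^ 2) = (1 - (s : ℂ)) * (1 + (s : ℂ)) by ring]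
      match_scalars <;> field_simp
    rw [hW, hZD]
    simp only [sub_apply, smul_apply, comp_apply, hTA]
    match_scalars <;> field_simp <;> ring
  have hcond : ∀ x y : H, (-Arow + Dstar ∘L R ∘L Zrow ∘L DA)
      (DA (S₂ (DL ((WithLp.equiv 2 (H × H)).symm (x, y))))) = 0 ↔
      (B₁ x + B₂ y) - (w₁ • x + w₂ • y) = 0 := by
    intro x y
    rw [hθ0, hBW, smul_eq_zero]
    simp [hsC, hip1]
  constructor
  · rintro ⟨⟨x, y⟩, h1, h2⟩
    refine ⟨(x, -y), ?_, ?_⟩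
    · rw [hcond, ← h1]
      simp only [map_neg, smul_neg]
      abel
    · intro h he
      apply h2 h
      simp only [Prod.mk.injEq] at he ⊢
      refine ⟨he.1, ?_⟩
      rw [← neg_neg y, he.2, neg_sub]
  · rintro ⟨⟨x, y⟩, h1, h2⟩
    refine ⟨(x, -y), ?_, ?_⟩
    · rw [hcond] at h1
      rw [← h1]
      simp only [map_neg, smul_neg]
      abel
    · intro h he
      apply h2 h
      simp only [Prod.mk.injEq] at he ⊢
      refine ⟨he.1, ?_⟩
      rw [← neg_neg y, he.2, neg_sub]
end
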